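/- For a k-symbol alphabet with k ≥ 2 and block size β = k+1, decoding is correct: for any nonempty string s of length m with symbol codes c_0, …, c_{m−1}, every element e of the Zeckendorf support Z(gc(s)) satisfies i := ⌊(e − 2)/β⌋ < m and c_i = (e − 2) mod β; consequently the map e ↦ (⌊(e−2)/β⌋, (e−2) mod β) applied to Z(gc(s)) uniquely recovers s from gc(s). -/

import Mathlib

/-!
The indices `2 + i * (k + 1) + c_i` that define `gc s` already form the Zeckendorf support of
`gc s`: they are at least `2`, and two of them from different blocks `i < j` differ by at least
`(k + 1) - (k - 1) = 2`, since the last position of every block is never used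
(`isZeckSupport_codeSupport`). By uniqueness of Zeckendorf representations
(`IsZeckSupport.unique`), every Zeckendorf support of `gc s` is this set of indices, and division
with remainder by `k + 1` reads off the position `i` and the symbol `c_i` of each index. If
`gc t = gc s`, then `t` and `s` have the same set of indices, hence the same length (its
cardinality) and the same symbol at each position.
-/

/-- The block-partition Fibonacci code of a string `s` over a `k`-symbol alphabet:
`gc s = Σ_{i<m} F_{2 + i·(k+1) + c_i}`, with `gc [] = 0`. -/
def gc {k : ℕ} (s : List (Fin k)) : ℕ :=
  ∑ i : Fin s.length, Nat.fib (2 + (i : ℕ) * (k + 1) + (s.get i : ℕ))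

/-- `S` is the Zeckendorf support of `n`: all indices `≥ 2`, pairwise differing by
at least `2`, and the corresponding Fibonacci numbers sum to `n`. -/
def IsZeckSupport (n : ℕ) (S : Finset ℕ) : Prop :=
  (∀ a ∈ S, 2 ≤ a) ∧ (∀ a ∈ S, ∀ b ∈ S, a < b → a + 2 ≤ b) ∧
    ∑ a ∈ S, Nat.fib a = n

/-- The index contributed to `gc s` by position `i` of the string. -/
def codeIndex {k : ℕ} (s : List (Fin k)) (i : Fin s.length) : ℕ :=
  2 + (i : ℕ) * (k + 1) + (s.get i : ℕ)

/-- The set of all Fibonacci indices that occur in the definition of `gc s`. -/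
def codeSupport {k : ℕ} (s : List (Fin k)) : Finset ℕ :=
  Finset.univ.image (codeIndex s)

lemma codeIndex_div {k : ℕ} (s : List (Fin k)) (i : Fin s.length) :
    (codeIndex s i - 2) / (k + 1) = i := by
  have h : codeIndex s i - 2 = (s.get i : ℕ) + (k + 1) * i := by
    unfold codeIndex; rw [mul_comm]; omega
  rw [h, Nat.add_mul_div_left _ _ k.succ_pos, Nat.div_eq_of_lt (by omega), zero_add]

lemma codeIndex_mod {k : ℕ} (s : List (Fin k)) (i : Fin s.length) :
    (codeIndex s i - 2) % (k + 1) = s.get i := by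
  have h : codeIndex s i - 2 = (s.get i : ℕ) + (k + 1) * i := by
    unfold codeIndex; rw [mul_comm]; omega
  rw [h, Nat.add_mul_mod_self_left, Nat.mod_eq_of_lt (by omega)]

lemma codeIndex_injective {k : ℕ} (s : List (Fin k)) : Function.Injective (codeIndex s) := by
  intro i j h
  rw [Fin.ext_iff, ← codeIndex_div s i, ← codeIndex_div s j, h]

lemma isZeckSupport_codeSupport {k : ℕ} (s : List (Fin k)) :
    IsZeckSupport (gc s) (codeSupport s) := by
  refine ⟨?_, ?_, ?_⟩
  · intro a ha
    obtain ⟨i, -, rfl⟩ := Finset.mem_image.1 ha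
    unfold codeIndex; omega
  · intro a ha b hb hab
    obtain ⟨i, -, rfl⟩ := Finset.mem_image.1 ha
    obtain ⟨j, -, rfl⟩ := Finset.mem_image.1 hb
    have hi := (s.get i).isLt
    have hj := (s.get j).isLt
    rcases lt_trichotomy i j with hij | rfl | hij
    · have h : ((i : ℕ) + 1) * (k + 1) ≤ j * (k + 1) := Nat.mul_le_mul_right _ hij
      unfold codeIndex
      linarith
    · exact absurd hab (lt_irrefl _)
    · have h : ((j : ℕ) + 1) * (k + 1) ≤ i * (k + 1) := Nat.mul_le_mul_right _ hij
      unfold codeIndex at hab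
      linarith
  · rw [codeSupport, Finset.sum_image fun i _ j _ h => codeIndex_injective s h]
    rfl

/-- The decreasing enumeration of a Zeckendorf support of `n` is `Nat.zeckendorf n`. -/
lemma IsZeckSupport.sort_eq {n : ℕ} {S : Finset ℕ} (hS : IsZeckSupport n S) :
    S.sort (· ≥ ·) = n.zeckendorf := by
  obtain ⟨h2, hgap, hsum⟩ := hS
  have hrep : (S.sort (· ≥ ·)).IsZeckendorfRep := by
    refine List.Pairwise.isChain (List.pairwise_append.2 ⟨?_, by simp, ?_⟩)
    · refine (Finset.sortedGT_sort S).pairwise.imp_of_mem ?_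
      intro a b ha hb hab
      exact hgap b ((Finset.mem_sort _).1 hb) a ((Finset.mem_sort _).1 ha) hab
    · intro a ha b hb
      rw [List.mem_singleton.1 hb]
      exact h2 a ((Finset.mem_sort _).1 ha)
  have hs : ((S.sort (· ≥ ·)).map Nat.fib).sum = n := by
    rw [← hsum, ← List.sum_toFinset _ (Finset.sort_nodup S _), Finset.sort_toFinset]
  rw [← hs, Nat.zeckendorf_sum_fib hrep]

lemma IsZeckSupport.unique {n : ℕ} {S T : Finset ℕ} (hS : IsZeckSupport n S)
    (hT : IsZeckSupport n T) : S = T := by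
  rw [← Finset.sort_toFinset S (· ≥ ·), hS.sort_eq, ← hT.sort_eq, Finset.sort_toFinset]

/-- decoding is correct: every element `e` of the Zeckendorf support of
`gc s` satisfies `⌊(e−2)/β⌋ < m` and `c_{⌊(e−2)/β⌋} = (e−2) mod β`; consequently `s`
is uniquely recoverable from `gc s`. -/
theorem stmt6 (k : ℕ) (hk : 2 ≤ k) (s : List (Fin k)) (hs : s ≠ [])
    (S : Finset ℕ) (hS : IsZeckSupport (gc s) S) :
    (∀ e ∈ S, ∃ h : (e - 2) / (k + 1) < s.length,
      (s.get ⟨(e - 2) / (k + 1), h⟩ : ℕ) = (e - 2) % (k + 1)) ∧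
    ∀ t : List (Fin k), gc t = gc s → t = s := by
  have decode : ∀ e ∈ codeSupport s, ∃ h : (e - 2) / (k + 1) < s.length,
      (s.get ⟨(e - 2) / (k + 1), h⟩ : ℕ) = (e - 2) % (k + 1) := by
    intro e he
    obtain ⟨i, -, rfl⟩ := Finset.mem_image.1 he
    have hd := codeIndex_div s i
    refine ⟨hd ▸ i.isLt, ?_⟩
    rw [codeIndex_mod]
    congr 2
    exact Fin.ext hd
  refine ⟨hS.unique (isZeckSupport_codeSupport s) ▸ decode, ?_⟩
  intro t ht
  have hsupp : codeSupport t = codeSupport s :=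
    (ht ▸ isZeckSupport_codeSupport t).unique (isZeckSupport_codeSupport s)
  have hlen : t.length = s.length := by
    have h := congrArg Finset.card hsupp
    simpa [codeSupport, Finset.card_image_of_injective, codeIndex_injective] using h
  refine List.ext_get hlen fun i hi hi' => ?_
  obtain ⟨h, hget⟩ := decode (codeIndex t ⟨i, hi⟩)
    (hsupp ▸ Finset.mem_image_of_mem _ (Finset.mem_univ _))
  rw [codeIndex_mod] at hget
  have hd : (⟨_, h⟩ : Fin s.length) = ⟨i, hi'⟩ := Fin.ext (codeIndex_div t ⟨i, hi⟩)
  rw [hd] at hget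
  exact Fin.ext hget.symm
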